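/- The convex polytope S ⊂ ℝ⁹ of points (λ_i^{(a)})_{i,a∈{1,2,3}} satisfying, for each a, 0 ≤ λ_1^{(a)} ≤ λ_2^{(a)} ≤ λ_3^{(a)} and λ_1^{(a)}+λ_2^{(a)}+λ_3^{(a)} = 1, together with, for every permutation (a,b,c) of (1,2,3), the seven inequalities (1) λ_2^{(a)}+λ_1^{(a)} ≤ λ_2^{(b)}+λ_1^{(b)}+λ_2^{(c)}+λ_1^{(c)}, (2) λ_3^{(a)}+λ_1^{(a)} ≤ λ_2^{(b)}+λ_1^{(b)}+λ_3^{(c)}+λ_1^{(c)}, (3) λ_2^{(a)}+λ_3^{(a)} ≤ λ_2^{(b)}+λ_1^{(b)}+λ_2^{(c)}+λ_3^{(c)}, (4) 2λ_2^{(a)}+λ_1^{(a)} ≤ 2λ_2^{(b)}+λ_1^{(b)}+2λ_2^{(c)}+λ_1^{(c)}, (5) 2λ_1^{(a)}+λ_2^{(a)} ≤ 2λ_2^{(b)}+λ_1^{(b)}+2λ_1^{(c)}+λ_2^{(c)}, (6) 2λ_2^{(a)}+λ_3^{(a)} ≤ 2λ_2^{(b)}+λ_1^{(b)}+2λ_2^{(c)}+λ_3^{(c)},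 (7) 2λ_2^{(a)}+λ_3^{(a)} ≤ 2λ_1^{(b)}+λ_2^{(b)}+2λ_3^{(c)}+λ_2^{(c)}, is the convex hull of the set of all qutrit permutations (simultaneous permutation of the index a over the three triples) of the following eleven points, written as ordered triples of eigenvalue-triples with O = (0,0,1), A = (0,1/2,1/2), B = (1/3,1/3,1/3): [O,O,O], [O,A,A], [O,B,B], [A,A,A], [A,A,B], [A,B,B], [B,B,B], [B,(0,1/3,2/3),(0,1/3,2/3)], [A,(0,1/4,3/4),(1/4,1/4,1/2)], [A,B,(1/6,1/6,2/3)], [A,(1/6,1/6,2/3),(1/6,1/6,2/3)]. -/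

import Mathlib

/-- The eigenvalue triple `O = (0, 0, 1)`. -/
noncomputable def Opt : Fin 3 → ℝ := ![0, 0, 1]

/-- The eigenvalue triple `A = (0, 1/2, 1/2)`. -/
noncomputable def Apt : Fin 3 → ℝ := ![0, 1/2, 1/2]

/-- The eigenvalue triple `B = (1/3, 1/3, 1/3)`. -/
noncomputable def Bpt : Fin 3 → ℝ := ![1/3, 1/3, 1/3]

/-- The eleven corner points of Theorem 2 (before applying qutrit permutations). -/
noncomputable def cornerPts : Set (Fin 3 → Fin 3 → ℝ) :=
  { ![Opt, Opt, Opt], ![Opt, Apt, Apt], ![Opt, Bpt, Bpt], ![Apt, Apt, Apt],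
    ![Apt, Apt, Bpt], ![Apt, Bpt, Bpt], ![Bpt, Bpt, Bpt],
    ![Bpt, ![0, 1/3, 2/3], ![0, 1/3, 2/3]],
    ![Apt, ![0, 1/4, 3/4], ![1/4, 1/4, 1/2]],
    ![Apt, Bpt, ![1/6, 1/6, 2/3]],
    ![Apt, ![1/6, 1/6, 2/3], ![1/6, 1/6, 2/3]] }

/-!
In barycentric coordinates with respect to the triangle `O`, `A`, `B`, a triple `λ` becomes the pair
`o = λ₃ - λ₂`, `b = 3 λ₁`, and the polytope becomes a cone in `o`, `b` and the total mass `s`. To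
write a point of this cone as a nonnegative combination of corners, subtract the largest multiple
of a chosen corner that stays in the cone: some facet inequality that is strict at this corner
becomes an equality, so the remainder lies on a facet avoiding the corner. Pulling in this way at
`OOO`, then at `ABB`, `BBB` and `AAO`, leaves only faces that are simplices or unions of at
most four simplices; there the weight of each corner is a multiple of the slack of an inequality
which is tight at all the other corners of the simplex.
-/

section General

variable {𝕜 : Type*} [Field 𝕜] [LinearOrder 𝕜] [IsStrictOrderedRing 𝕜]

/-- In the applications the pairs are the slacks of the facet inequalities at the given point and at
a corner, and `t` is the largest multiple of the corner that can be subtracted. -/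
theorem exists_nonneg_forall_mul_le_exists_mul_eq {S : Set (𝕜 × 𝕜)} (hfin : S.Finite)
    (hne : S.Nonempty) (hS : ∀ p ∈ S, 0 ≤ p.1 ∧ 0 < p.2) :
    ∃ t, 0 ≤ t ∧ (∀ p ∈ S, t * p.2 ≤ p.1) ∧ ∃ p ∈ S, t * p.2 = p.1 := by
  obtain ⟨p, hp, hmin⟩ := Set.exists_min_image S (fun q => q.1 / q.2) hfin hne
  exact ⟨p.1 / p.2, div_nonneg (hS p hp).1 (hS p hp).2.le,
    fun q hq => (le_div_iff₀ (hS q hq).2).1 (hmin q hq), p, hp, div_mul_cancel₀ _ (hS p hp).2.ne'⟩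

theorem mem_convexHull_of_mem_pointedConeHull {E : Type*} [AddCommGroup E] [Module 𝕜 E]
    {S : Set E} (f : E →ₗ[𝕜] 𝕜) (hS : ∀ y ∈ S, f y = 1) {x : E}
    (hx : x ∈ PointedCone.hull 𝕜 S) (hfx : f x = 1) : x ∈ convexHull 𝕜 S := by
  obtain ⟨c, hcS, hc, rfl⟩ := PointedCone.mem_hull_set.1 hx
  have hsum : ∑ y ∈ c.support, c y = 1 := by
    rw [← hfx, Finsupp.sum, map_sum]
    exact Finset.sum_congr rfl fun y hy => by simp [hS y (hcS hy)]
  exact (convex_convexHull 𝕜 S).sum_mem (fun y _ => hc y) hsum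
    fun y hy => subset_convexHull 𝕜 S (hcS hy)

end General

/-- Names for the eigenvalue triples occurring in the corner points: `O`, `A`, `B` as in `Opt`,
`Apt`, `Bpt`, and `C = (0, 1/3, 2/3)`, `D = (0, 1/4, 3/4)`, `E = (1/4, 1/4, 1/2)`,
`S = (1/6, 1/6, 2/3)`. A corner point is a word of three letters. -/
inductive Letter
  | O | A | B | C | D | E | S
  deriving DecidableEq

namespace Letter

/-- The eigenvalue triple named by a letter. -/
noncomputable def triple : Letter → Fin 3 → ℝ
  | O => Opt
  | A => Apt
  | B => Bpt
  | C => ![0, 1/3, 2/3]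
  | D => ![0, 1/4, 3/4]
  | E => ![1/4, 1/4, 1/2]
  | S => ![1/6, 1/6, 2/3]

/-- The barycentric coordinate at `O` of the triple with respect to the triangle `O`, `A`, `B`. -/
noncomputable def o : Letter → ℝ
  | O => 1
  | A => 0
  | B => 0
  | C => 1/3
  | D => 1/2
  | E => 1/4
  | S => 1/2

/-- The barycentric coordinate at `B` of the triple with respect to the triangle `O`, `A`, `B`. -/
noncomputable def b : Letter → ℝ
  | O => 0
  | A => 0
  | B => 1
  | C => 0
  | D => 0
  | E => 3/4
  | S => 1/2

end Letter

/-- The triple with barycentric coordinates `o` at `O` and `b` at `B`, homogenized to total mass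
`s`: an ordered triple `λ` of sum `s` has `o = λ₃ - λ₂` and `b = 3 λ₁`. -/
noncomputable def baryTriple (s o b : ℝ) : Fin 3 → ℝ :=
  o • Opt + (s - o - b) • Apt + b • Bpt

theorem baryTriple_eq (s o b : ℝ) :
    baryTriple s o b = ![b / 3, (s - o) / 2 - b / 6, (s + o) / 2 - b / 6] := by
  ext j
  fin_cases j <;>
    · simp only [baryTriple, Opt, Apt, Bpt, Pi.add_apply, Pi.smul_apply, smul_eq_mul,
        Fin.zero_eta, Fin.mk_one, Fin.reduceFinMk, Matrix.cons_val]
      ring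

theorem baryTriple_eq_sub_add_smul (s o b t o' b' : ℝ) :
    baryTriple s o b = baryTriple (s - t) (o - t * o') (b - t * b') + t • baryTriple 1 o' b' := by
  unfold baryTriple
  module

theorem sum_smul_baryTriple {ι : Type*} (S : Finset ι) (c o b : ι → ℝ) :
    ∑ k ∈ S, c k • baryTriple 1 (o k) (b k) =
      baryTriple (∑ k ∈ S, c k) (∑ k ∈ S, c k * o k) (∑ k ∈ S, c k * b k) := by
  simp only [baryTriple, smul_add, smul_smul, mul_sub, mul_one, Finset.sum_add_distrib,
    ← Finset.sum_smul, Finset.sum_sub_distrib]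

theorem Letter.triple_eq_baryTriple (x : Letter) : x.triple = baryTriple 1 x.o x.b := by
  rw [baryTriple_eq]
  cases x <;> norm_num [Letter.triple, Letter.o, Letter.b, Opt, Apt, Bpt]

/-- The words of the eleven corner points, in the order of `cornerPts`. -/
def cornerWords : List (Fin 3 → Letter) :=
  [![.O, .O, .O], ![.O, .A, .A], ![.O, .B, .B], ![.A, .A, .A], ![.A, .A, .B], ![.A, .B, .B],
    ![.B, .B, .B], ![.B, .C, .C], ![.A, .D, .E], ![.A, .B, .S], ![.A, .S, .S]]

/-- The word of a corner point, up to a permutation of the qutrits. -/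
abbrev IsCornerWord (w : Fin 3 → Letter) : Prop :=
  ∃ σ : Equiv.Perm (Fin 3), ∃ q ∈ cornerWords, w = q ∘ σ

/-- The point of `ℝ⁹` spelled by a word. -/
noncomputable def wordPoint (w : Fin 3 → Letter) : Fin 3 → Fin 3 → ℝ :=
  fun i => (w i).triple

theorem cornerPts_eq_image : cornerPts = wordPoint '' {w | w ∈ cornerWords} := by
  have cons_eq (x y z : Letter) : wordPoint ![x, y, z] = ![x.triple, y.triple, z.triple] := by
    ext i
    fin_cases i <;> rfl
  ext p
  simp [cornerPts, cornerWords, cons_eq, Letter.triple, eq_comm]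

theorem orbit_cornerPts_eq_image :
    {p : Fin 3 → Fin 3 → ℝ | ∃ σ : Equiv.Perm (Fin 3), ∃ q ∈ cornerPts, p = fun a => q (σ a)} =
      wordPoint '' {w | IsCornerWord w} := by
  rw [cornerPts_eq_image]
  ext p
  constructor
  · rintro ⟨σ, _, ⟨w, hw, rfl⟩, rfl⟩
    exact ⟨w ∘ σ, ⟨σ, w, hw, rfl⟩, rfl⟩
  · rintro ⟨_, ⟨σ, w, hw, rfl⟩, rfl⟩
    exact ⟨σ, wordPoint w, ⟨w, hw, rfl⟩, rfl⟩

/-- The cone over all qutrit permutations of the corner points. -/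
def cornerCone : PointedCone ℝ (Fin 3 → Fin 3 → ℝ) :=
  PointedCone.hull ℝ (wordPoint '' {w | IsCornerWord w})

theorem comp_perm_mem_cornerCone {p : Fin 3 → Fin 3 → ℝ} (hp : p ∈ cornerCone)
    (σ : Equiv.Perm (Fin 3)) : p ∘ σ ∈ cornerCone := by
  refine Submodule.span_induction ?_ (zero_mem _) (fun _ _ _ _ => add_mem)
    (fun c _ _ => Submodule.smul_mem _ c) hp
  rintro _ ⟨_, ⟨τ, q, hq, rfl⟩, rfl⟩
  exact PointedCone.subset_hull ⟨(q ∘ τ) ∘ σ, ⟨τ * σ, q, hq, rfl⟩, rfl⟩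

/-- The constraints of the polytope in homogenized barycentric coordinates, for the qutrit order
`(a, b, c) = (0, 1, 2)`: the ordering of the first triple, and then the inequalities (1)–(7) in the
numbering of the paper. -/
structure BaryIneqs (s o₀ b₀ o₁ b₁ o₂ b₂ : ℝ) : Prop where
  o_nonneg : 0 ≤ o₀
  b_nonneg : 0 ≤ b₀
  add_le : o₀ + b₀ ≤ s
  ineq₁ : 3 * (o₁ + o₂) + b₀ ≤ 3 * (s + o₀) + b₁ + b₂
  ineq₂ : 3 * (o₀ + o₁) + b₀ ≤ 3 * (s + o₂) + b₁ + b₂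
  ineq₃ : 3 * o₁ + 2 * b₂ ≤ 3 * s + 2 * b₀ + b₁
  ineq₄ : o₁ + o₂ ≤ s + o₀
  ineq₅ : 2 * o₁ + o₂ + b₀ ≤ 2 * s + o₀ + b₂
  ineq₆ : 2 * o₁ + o₂ + b₂ ≤ 2 * s + o₀ + b₀
  ineq₇ : o₁ + b₂ ≤ s + o₀ + b₀ + b₁ + o₂

/-- Membership in `cornerCone` of the point with the given barycentric coordinates. They are kept as
separate scalars so that linear arithmetic applies to them. -/
def InCornerCone (s o₀ b₀ o₁ b₁ o₂ b₂ : ℝ) : Prop :=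
  ![baryTriple s o₀ b₀, baryTriple s o₁ b₁, baryTriple s o₂ b₂] ∈ cornerCone

namespace InCornerCone

variable {s o₀ b₀ o₁ b₁ o₂ b₂ : ℝ}

theorem swap₀₁ (h : InCornerCone s o₁ b₁ o₀ b₀ o₂ b₂) : InCornerCone s o₀ b₀ o₁ b₁ o₂ b₂ := by
  unfold InCornerCone
  convert comp_perm_mem_cornerCone h (Equiv.swap 0 1) using 1
  ext i j
  fin_cases i <;> rfl

theorem swap₁₂ (h : InCornerCone s o₀ b₀ o₂ b₂ o₁ b₁) : InCornerCone s o₀ b₀ o₁ b₁ o₂ b₂ := by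
  unfold InCornerCone
  convert comp_perm_mem_cornerCone h (Equiv.swap 1 2) using 1
  ext i j
  fin_cases i <;> rfl

theorem swap₀₂ (h : InCornerCone s o₂ b₂ o₁ b₁ o₀ b₀) : InCornerCone s o₀ b₀ o₁ b₁ o₂ b₂ :=
  h.swap₀₁.swap₁₂.swap₀₁

theorem rotate (h : InCornerCone s o₁ b₁ o₂ b₂ o₀ b₀) : InCornerCone s o₀ b₀ o₁ b₁ o₂ b₂ :=
  h.swap₁₂.swap₀₁

theorem add_smul_corner {w : Fin 3 → Letter} (hw : IsCornerWord w) {t : ℝ} (ht : 0 ≤ t)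
    (h : InCornerCone (s - t) (o₀ - t * (w 0).o) (b₀ - t * (w 0).b) (o₁ - t * (w 1).o)
      (b₁ - t * (w 1).b) (o₂ - t * (w 2).o) (b₂ - t * (w 2).b)) :
    InCornerCone s o₀ b₀ o₁ b₁ o₂ b₂ := by
  have hmem : t • wordPoint w ∈ cornerCone :=
    PointedCone.smul_mem _ ht (PointedCone.subset_hull ⟨w, hw, rfl⟩)
  unfold InCornerCone
  convert add_mem h hmem using 1
  ext1 i
  fin_cases i <;>
    exact (baryTriple_eq_sub_add_smul ..).trans (by rw [← Letter.triple_eq_baryTriple]; rfl)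

theorem of_weights {n : ℕ} (w : Fin n → Fin 3 → Letter) (hw : ∀ k, IsCornerWord (w k))
    (c : Fin n → ℝ) (hc : ∀ k, 0 ≤ c k) (hs : ∑ k, c k = s)
    (ho₀ : ∑ k, c k * (w k 0).o = o₀) (hb₀ : ∑ k, c k * (w k 0).b = b₀)
    (ho₁ : ∑ k, c k * (w k 1).o = o₁) (hb₁ : ∑ k, c k * (w k 1).b = b₁)
    (ho₂ : ∑ k, c k * (w k 2).o = o₂) (hb₂ : ∑ k, c k * (w k 2).b = b₂) :
    InCornerCone s o₀ b₀ o₁ b₁ o₂ b₂ := by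
  have hmem : ∑ k, c k • wordPoint (w k) ∈ cornerCone := sum_mem fun k _ =>
    PointedCone.smul_mem _ (hc k) (PointedCone.subset_hull ⟨w k, hw k, rfl⟩)
  unfold InCornerCone
  convert hmem using 1
  subst_vars
  ext1 i
  fin_cases i <;>
    simp [wordPoint, Letter.triple_eq_baryTriple, Finset.sum_apply, sum_smul_baryTriple]

theorem of_ineq₇_eq (ho₀ : 0 ≤ o₀) (hb₀ : 0 ≤ b₀) (hb₁ : 0 ≤ b₁) (ho₂ : 0 ≤ o₂) (ha₂ : o₂ + b₂ ≤ s)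
    (h₃ : 2 * b₂ + 3 * o₁ ≤ 3 * s + 2 * b₀ + b₁) (h₇ : o₁ + b₂ = s + o₀ + b₀ + b₁ + o₂) :
    InCornerCone s o₀ b₀ o₁ b₁ o₂ b₂ := by
  apply of_weights
    ![![.A, .O, .A], ![.B, .O, .B], ![.A, .A, .B], ![.C, .C, .B], ![.A, .D, .E], ![.A, .S, .B]]
    (by decide)
    ![s - o₂ - b₂, b₀, 3 * s + 2 * b₀ + b₁ - 2 * b₂ - 3 * o₁, 3 * o₀, 4 * o₂, 2 * b₁]
  · intro k
    fin_cases k <;> simp only [Fin.zero_eta, Fin.mk_one, Fin.reduceFinMk, Matrix.cons_val] <;>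
      linarith
  all_goals
    simp only [Fin.sum_univ_six, Matrix.cons_val, Letter.o, Letter.b]
    linarith

theorem of_ineq₁_eq (ho₀ : o₀ = 0) (hb₁ : 0 ≤ b₁) (hb₂ : 0 ≤ b₂) (h₄ : o₁ + o₂ ≤ s)
    (h₅ : 2 * o₁ + o₂ + b₀ ≤ 2 * s + b₂) (h₅' : 2 * o₂ + o₁ + b₀ ≤ 2 * s + b₁)
    (h₁ : 3 * (o₁ + o₂) + b₀ = 3 * s + b₁ + b₂) :
    InCornerCone s o₀ b₀ o₁ b₁ o₂ b₂ := by
  apply of_weights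
    ![![.A, .A, .O], ![.A, .O, .A], ![.B, .B, .O], ![.B, .O, .B], ![.B, .C, .C]]
    (by decide)
    ![2 * s + b₂ - 2 * o₁ - o₂ - b₀, 2 * s + b₁ - 2 * o₂ - o₁ - b₀, b₁, b₂, 3 * (s - o₁ - o₂)]
  · intro k
    fin_cases k <;> simp only [Fin.zero_eta, Fin.mk_one, Fin.reduceFinMk, Matrix.cons_val] <;>
      linarith
  all_goals
    simp only [Fin.sum_univ_five, Matrix.cons_val, Letter.o, Letter.b]
    linarith

theorem of_ineq₂_eq (ho₀ : o₀ = 0) (hb₀ : 0 ≤ b₀) (hb₁ : 0 ≤ b₁) (ha₂ : o₂ + b₂ ≤ s)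
    (h₄ : o₁ + o₂ ≤ s) (h₆ : 2 * o₁ + o₂ + b₂ ≤ 2 * s + b₀)
    (h₂ : 3 * (o₁ + o₂) + b₂ = 3 * s + b₀ + b₁) :
    InCornerCone s o₀ b₀ o₁ b₁ o₂ b₂ := by
  apply of_weights
    ![![.A, .A, .O], ![.A, .O, .A], ![.A, .D, .E], ![.A, .S, .S], ![.B, .O, .B]]
    (by decide)
    ![2 * s + b₀ - 2 * o₁ - o₂ - b₂, s - o₂ - b₂, 4 * (s - o₁ - o₂), 2 * b₁, b₀]
  · intro k
    fin_cases k <;> simp only [Fin.zero_eta, Fin.mk_one, Fin.reduceFinMk, Matrix.cons_val] <;>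
      linarith
  all_goals
    simp only [Fin.sum_univ_five, Matrix.cons_val, Letter.o, Letter.b]
    linarith

theorem of_ineq₄_eq (ho₀ : o₀ = 0) (ha₁ : o₁ + b₁ ≤ s) (ha₂ : o₂ + b₂ ≤ s)
    (h₁ : 3 * (o₁ + o₂) + b₀ ≤ 3 * s + b₁ + b₂) (h₂ : 3 * (o₁ + o₂) + b₁ ≤ 3 * s + b₀ + b₂)
    (h₂' : 3 * (o₁ + o₂) + b₂ ≤ 3 * s + b₀ + b₁) (h₄ : o₁ + o₂ = s) :
    InCornerCone s o₀ b₀ o₁ b₁ o₂ b₂ := by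
  apply of_weights
    ![![.A, .A, .O], ![.A, .O, .A], ![.A, .S, .S], ![.B, .B, .O], ![.B, .O, .B]]
    (by decide)
    ![s - o₁ - b₁, s - o₂ - b₂, 3 * s + b₁ + b₂ - 3 * (o₁ + o₂) - b₀,
      (3 * s + b₀ + b₁ - 3 * (o₁ + o₂) - b₂) / 2, (3 * s + b₀ + b₂ - 3 * (o₁ + o₂) - b₁) / 2]
  · intro k
    fin_cases k <;> simp only [Fin.zero_eta, Fin.mk_one, Fin.reduceFinMk, Matrix.cons_val] <;>
      linarith
  all_goals
    simp only [Fin.sum_univ_five, Matrix.cons_val, Letter.o, Letter.b]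
    linarith

theorem of_ineq₅_eq (ho₀ : o₀ = 0) (ha₀ : b₀ ≤ s) (ha₁ : o₁ + b₁ ≤ s) (hb₂ : 0 ≤ b₂)
    (h₁ : 3 * (o₁ + o₂) + b₀ ≤ 3 * s + b₁ + b₂) (h₇ : o₁ + b₀ ≤ s + o₂ + b₂ + b₁)
    (h₅ : 2 * o₁ + o₂ + b₀ = 2 * s + b₂) :
    InCornerCone s o₀ b₀ o₁ b₁ o₂ b₂ := by
  apply of_weights
    ![![.A, .O, .A], ![.B, .B, .O], ![.B, .O, .B], ![.B, .C, .C], ![.B, .S, .A]]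
    (by decide)
    ![s - b₀, (s + o₂ + b₂ + b₁ - o₁ - b₀) / 2, b₂, 3 / 2 * (s - o₁ - b₁),
      3 * s + b₁ + b₂ - 3 * (o₁ + o₂) - b₀]
  · intro k
    fin_cases k <;> simp only [Fin.zero_eta, Fin.mk_one, Fin.reduceFinMk, Matrix.cons_val] <;>
      linarith
  all_goals
    simp only [Fin.sum_univ_five, Matrix.cons_val, Letter.o, Letter.b]
    linarith

theorem of_ineq₆_eq (ho₀ : o₀ = 0) (hb₀ : 0 ≤ b₀) (ha₁ : o₁ + b₁ ≤ s) (ha₂ : o₂ + b₂ ≤ s)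
    (h₂ : 3 * (o₁ + o₂) + b₂ ≤ 3 * s + b₀ + b₁) (h₇ : o₁ + b₂ ≤ s + b₀ + b₁ + o₂)
    (h₆ : 2 * o₁ + o₂ + b₂ = 2 * s + b₀) :
    InCornerCone s o₀ b₀ o₁ b₁ o₂ b₂ := by
  apply of_weights
    ![![.A, .O, .A], ![.A, .D, .E], ![.A, .S, .B], ![.A, .S, .S], ![.B, .O, .B]]
    (by decide)
    ![s - o₂ - b₂, 2 * (s - o₁ - b₁), 3 * s + b₀ + b₁ - 3 * (o₁ + o₂) - b₂,
      s + b₀ + b₁ + o₂ - o₁ - b₂, b₀]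
  · intro k
    fin_cases k <;> simp only [Fin.zero_eta, Fin.mk_one, Fin.reduceFinMk, Matrix.cons_val] <;>
      linarith
  all_goals
    simp only [Fin.sum_univ_five, Matrix.cons_val, Letter.o, Letter.b]
    linarith

theorem of_b₀_eq_s_of_b₁_eq_zero (ho₀ : o₀ = 0) (hb₀ : b₀ = s) (hb₁ : b₁ = 0) (ho₁ : 0 ≤ o₁)
    (ho₂ : 0 ≤ o₂) (ha₂ : o₂ + b₂ ≤ s) (h₅ : 2 * o₂ + o₁ ≤ s) (h₇ : o₂ ≤ o₁ + b₂)
    (h₇' : o₁ ≤ o₂ + b₂) :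
    InCornerCone s o₀ b₀ o₁ b₁ o₂ b₂ := by
  rcases le_total (o₁ + o₂) b₂ with h | h
  · apply of_weights
      ![![.B, .O, .B], ![.B, .A, .S], ![.B, .A, .B], ![.B, .A, .A]] (by decide)
      ![o₁, 2 * o₂, b₂ - o₁ - o₂, s - o₂ - b₂]
    · intro k
      fin_cases k <;> simp only [Fin.zero_eta, Fin.mk_one, Fin.reduceFinMk, Matrix.cons_val] <;>
        linarith
    all_goals
      simp only [Fin.sum_univ_four, Matrix.cons_val, Letter.o, Letter.b]
      linarith
  · apply of_weights
      ![![.B, .C, .C], ![.B, .O, .B], ![.B, .A, .S], ![.B, .A, .A]] (by decide)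
      ![3 / 2 * (o₁ + o₂ - b₂), (o₁ - o₂ + b₂) / 2, o₂ - o₁ + b₂, s - o₁ - 2 * o₂]
    · intro k
      fin_cases k <;> simp only [Fin.zero_eta, Fin.mk_one, Fin.reduceFinMk, Matrix.cons_val] <;>
        linarith
    all_goals
      simp only [Fin.sum_univ_four, Matrix.cons_val, Letter.o, Letter.b]
      linarith

theorem of_b₁_eq_zero_of_o₂_eq_zero_of_le (ho₀ : o₀ = 0) (hb₁ : b₁ = 0) (ho₂ : o₂ = 0)
    (ho₁ : 0 ≤ o₁) (hb₀ : 0 ≤ b₀) (ha₂ : b₂ ≤ s) (h₇ : o₁ + b₂ ≤ s + b₀) (hle : b₀ ≤ b₂) :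
    InCornerCone s o₀ b₀ o₁ b₁ o₂ b₂ := by
  rcases le_total o₁ b₀ with h | h
  · apply of_weights
      ![![.B, .O, .B], ![.B, .A, .B], ![.A, .A, .B], ![.A, .A, .A]] (by decide)
      ![o₁, b₀ - o₁, b₂ - b₀, s - b₂]
    · intro k
      fin_cases k <;> simp only [Fin.zero_eta, Fin.mk_one, Fin.reduceFinMk, Matrix.cons_val] <;>
        linarith
    all_goals
      simp only [Fin.sum_univ_four, Matrix.cons_val, Letter.o, Letter.b]
      linarith
  · apply of_weights
      ![![.B, .O, .B], ![.A, .O, .A], ![.A, .A, .B], ![.A, .A, .A]] (by decide)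
      ![b₀, o₁ - b₀, b₂ - b₀, s + b₀ - o₁ - b₂]
    · intro k
      fin_cases k <;> simp only [Fin.zero_eta, Fin.mk_one, Fin.reduceFinMk, Matrix.cons_val] <;>
        linarith
    all_goals
      simp only [Fin.sum_univ_four, Matrix.cons_val, Letter.o, Letter.b]
      linarith

theorem of_b₁_eq_zero_of_o₂_eq_zero (ho₀ : o₀ = 0) (hb₁ : b₁ = 0) (ho₂ : o₂ = 0) (ho₁ : 0 ≤ o₁)
    (hb₀ : 0 ≤ b₀) (hb₂ : 0 ≤ b₂) (ha₀ : b₀ ≤ s) (ha₂ : b₂ ≤ s) (h₇ : o₁ + b₂ ≤ s + b₀)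
    (h₇' : o₁ + b₀ ≤ s + b₂) :
    InCornerCone s o₀ b₀ o₁ b₁ o₂ b₂ := by
  rcases le_total b₀ b₂ with h | h
  · apply of_b₁_eq_zero_of_o₂_eq_zero_of_le <;> linarith
  · apply swap₀₂
    apply of_b₁_eq_zero_of_o₂_eq_zero_of_le <;> linarith

theorem of_b₀_eq_s (ho₀ : o₀ = 0) (hb₀ : b₀ = s) (ho₁ : 0 ≤ o₁) (hb₁ : 0 ≤ b₁) (ha₁ : o₁ + b₁ ≤ s)
    (ho₂ : 0 ≤ o₂) (hb₂ : 0 ≤ b₂) (ha₂ : o₂ + b₂ ≤ s) (h₅ : 2 * o₁ + o₂ ≤ s + b₂)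
    (h₅' : 2 * o₂ + o₁ ≤ s + b₁) (h₇ : o₂ ≤ o₁ + b₁ + b₂) (h₇' : o₁ ≤ o₂ + b₂ + b₁) :
    InCornerCone s o₀ b₀ o₁ b₁ o₂ b₂ := by
  obtain ⟨t, ht, hle, htight⟩ := exists_nonneg_forall_mul_le_exists_mul_eq
    (S := {(b₁, 1), (b₂, 1), (s + b₂ - (2 * o₁ + o₂), 2), (s + b₁ - (2 * o₂ + o₁), 2),
      (o₁ + b₁ + b₂ - o₂, 2), (o₂ + b₂ + b₁ - o₁, 2)})
    (Set.toFinite _) (Set.insert_nonempty _ _) (by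
      simp only [Set.mem_insert_iff, Set.mem_singleton_iff, forall_eq_or_imp, forall_eq]
      split_ands <;> linarith)
  simp only [Set.mem_insert_iff, Set.mem_singleton_iff, forall_eq_or_imp, forall_eq,
    exists_eq_or_imp, exists_eq_left, mul_one] at hle htight
  obtain ⟨_, _, _, _, _, _⟩ := hle
  suffices InCornerCone (s - t) o₀ (b₀ - t) o₁ (b₁ - t) o₂ (b₂ - t) from
    add_smul_corner (w := ![.B, .B, .B]) (by decide) ht (by simpa [Letter.o, Letter.b] using this)
  rcases htight with eb₁ | eb₂ | e₅ | e₅' | e₇ | e₇'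
  · apply of_b₀_eq_s_of_b₁_eq_zero <;> linarith
  · exact swap₁₂ (by apply of_b₀_eq_s_of_b₁_eq_zero <;> linarith)
  · apply of_ineq₅_eq <;> linarith
  · exact swap₁₂ (by apply of_ineq₅_eq <;> linarith)
  · exact rotate (by apply of_ineq₇_eq <;> linarith)
  · exact swap₀₂ (by apply of_ineq₇_eq <;> linarith)

theorem of_b₁_eq_zero (ho₀ : o₀ = 0) (hb₁ : b₁ = 0) (hb₀ : 0 ≤ b₀) (ha₀ : b₀ ≤ s) (ho₁ : 0 ≤ o₁)
    (ho₂ : 0 ≤ o₂) (hb₂ : 0 ≤ b₂) (ha₂ : o₂ + b₂ ≤ s) (h₁ : 3 * (o₁ + o₂) + b₀ ≤ 3 * s + b₂)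
    (h₂ : 3 * (o₁ + o₂) + b₂ ≤ 3 * s + b₀) (h₅ : 2 * o₂ + o₁ + b₀ ≤ 2 * s)
    (h₇ : o₁ + b₂ ≤ s + b₀ + o₂) (h₇' : o₂ + b₀ ≤ s + o₁ + b₂) (h₇'' : o₁ + b₀ ≤ s + o₂ + b₂) :
    InCornerCone s o₀ b₀ o₁ b₁ o₂ b₂ := by
  obtain ⟨t, ht, hle, htight⟩ := exists_nonneg_forall_mul_le_exists_mul_eq
    (S := {(s - b₀, 1), (o₂, 1), (s + b₀ + o₂ - (o₁ + b₂), 2), (s + o₂ + b₂ - (o₁ + b₀), 2)})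
    (Set.toFinite _) (Set.insert_nonempty _ _) (by
      simp only [Set.mem_insert_iff, Set.mem_singleton_iff, forall_eq_or_imp, forall_eq]
      split_ands <;> linarith)
  simp only [Set.mem_insert_iff, Set.mem_singleton_iff, forall_eq_or_imp, forall_eq,
    exists_eq_or_imp, exists_eq_left, mul_one] at hle htight
  obtain ⟨_, _, _, _⟩ := hle
  suffices InCornerCone (s - t) o₀ b₀ o₁ b₁ (o₂ - t) b₂ from
    add_smul_corner (w := ![.A, .A, .O]) (by decide) ht (by simpa [Letter.o, Letter.b] using this)
  rcases htight with ea₀ | eo₂ | e₇ | e₇'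
  · apply of_b₀_eq_s_of_b₁_eq_zero <;> linarith
  · apply of_b₁_eq_zero_of_o₂_eq_zero <;> linarith
  · apply of_ineq₇_eq <;> linarith
  · exact swap₀₂ (by apply of_ineq₇_eq <;> linarith)

theorem of_o₀_eq_zero (ho₀ : o₀ = 0) (h₀₁₂ : BaryIneqs s o₀ b₀ o₁ b₁ o₂ b₂)
    (h₀₂₁ : BaryIneqs s o₀ b₀ o₂ b₂ o₁ b₁) (h₁₂₀ : BaryIneqs s o₁ b₁ o₂ b₂ o₀ b₀)
    (h₂₁₀ : BaryIneqs s o₂ b₂ o₁ b₁ o₀ b₀) :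
    InCornerCone s o₀ b₀ o₁ b₁ o₂ b₂ := by
  obtain ⟨-, hb₀, ha₀, h₁, -, -, h₄, h₅, h₆, h₇⟩ := h₀₁₂
  obtain ⟨-, -, -, -, -, -, -, h₅', h₆', h₇'⟩ := h₀₂₁
  obtain ⟨ho₁, hb₁, ha₁, -, h₂, -, -, -, -, h₇₁₂₀⟩ := h₁₂₀
  obtain ⟨ho₂, hb₂, ha₂, -, h₂', -, -, -, -, h₇₂₁₀⟩ := h₂₁₀
  obtain ⟨t, ht, hle, htight⟩ := exists_nonneg_forall_mul_le_exists_mul_eq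
    (S := {(b₁, 1), (b₂, 1), (s - b₀, 1), (3 * s + b₁ + b₂ - (3 * (o₁ + o₂) + b₀), 5),
      (3 * s + b₀ + b₂ - (3 * (o₁ + o₂) + b₁), 3), (3 * s + b₀ + b₁ - (3 * (o₁ + o₂) + b₂), 3),
      (s - (o₁ + o₂), 1), (2 * s + b₂ - (2 * o₁ + o₂ + b₀), 3),
      (2 * s + b₁ - (2 * o₂ + o₁ + b₀), 3), (2 * s + b₀ - (2 * o₁ + o₂ + b₂), 1),
      (2 * s + b₀ - (2 * o₂ + o₁ + b₁), 1),
      (s + b₀ + b₁ + o₂ - (o₁ + b₂), 1), (s + b₀ + b₂ + o₁ - (o₂ + b₁), 1),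
      (s + o₁ + b₁ + b₂ - (o₂ + b₀), 3), (s + o₂ + b₂ + b₁ - (o₁ + b₀), 3)})
    (Set.toFinite _) (Set.insert_nonempty _ _) (by
      simp only [Set.mem_insert_iff, Set.mem_singleton_iff, forall_eq_or_imp, forall_eq]
      split_ands <;> linarith)
  simp only [Set.mem_insert_iff, Set.mem_singleton_iff, forall_eq_or_imp, forall_eq,
    exists_eq_or_imp, exists_eq_left, mul_one] at hle htight
  obtain ⟨_, _, _, _, _, _, _, _, _, _, _, _, _, _, _⟩ := hle
  suffices InCornerCone (s - t) o₀ b₀ o₁ (b₁ - t) o₂ (b₂ - t) from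
    add_smul_corner (w := ![.A, .B, .B]) (by decide) ht (by simpa [Letter.o, Letter.b] using this)
  rcases htight with eb₁ | eb₂ | ea₀ | e₁ | e₂ | e₂' | e₄ | e₅ | e₅' | e₆ | e₆' | e₇ | e₇' |
    e₇'' | e₇'''
  · apply of_b₁_eq_zero <;> linarith
  · exact swap₁₂ (by apply of_b₁_eq_zero <;> linarith)
  · apply of_b₀_eq_s <;> linarith
  · apply of_ineq₁_eq <;> linarith
  · exact swap₁₂ (by apply of_ineq₂_eq <;> linarith)
  · apply of_ineq₂_eq <;> linarith
  · apply of_ineq₄_eq <;> linarith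
  · apply of_ineq₅_eq <;> linarith
  · exact swap₁₂ (by apply of_ineq₅_eq <;> linarith)
  · apply of_ineq₆_eq <;> linarith
  · exact swap₁₂ (by apply of_ineq₆_eq <;> linarith)
  · apply of_ineq₇_eq <;> linarith
  · exact swap₁₂ (by apply of_ineq₇_eq <;> linarith)
  · exact rotate (by apply of_ineq₇_eq <;> linarith)
  · exact swap₀₂ (by apply of_ineq₇_eq <;> linarith)

end InCornerCone

/-- The homogenized constraints of the polytope: `BaryIneqs` for every order of the qutrits. -/
def Admissible (s : ℝ) (o b : Fin 3 → ℝ) : Prop :=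
  ∀ σ : Equiv.Perm (Fin 3),
    BaryIneqs s (o (σ 0)) (b (σ 0)) (o (σ 1)) (b (σ 1)) (o (σ 2)) (b (σ 2))

theorem mem_cornerCone_of_inCornerCone_perm {s : ℝ} {o b : Fin 3 → ℝ} (σ : Equiv.Perm (Fin 3))
    (h : InCornerCone s (o (σ 0)) (b (σ 0)) (o (σ 1)) (b (σ 1)) (o (σ 2)) (b (σ 2))) :
    (fun i => baryTriple s (o i) (b i)) ∈ cornerCone := by
  have hperm : ![baryTriple s (o (σ 0)) (b (σ 0)), baryTriple s (o (σ 1)) (b (σ 1)),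
      baryTriple s (o (σ 2)) (b (σ 2))] = (fun i => baryTriple s (o i) (b i)) ∘ σ := by
    ext i
    fin_cases i <;> rfl
  rw [InCornerCone, hperm] at h
  simpa [Function.comp_def] using comp_perm_mem_cornerCone h σ⁻¹

namespace Admissible

variable {s : ℝ} {o b : Fin 3 → ℝ}

theorem comp_perm (h : Admissible s o b) (τ : Equiv.Perm (Fin 3)) :
    Admissible s (o ∘ τ) (b ∘ τ) := fun σ => h (τ * σ)

theorem o_nonneg (h : Admissible s o b) (i : Fin 3) : 0 ≤ o i := by
  simpa using (h (Equiv.swap 0 i)).o_nonneg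

theorem mem_cornerCone_of_o_eq_zero (h : Admissible s o b) {i : Fin 3} (hi : o i = 0) :
    (fun j => baryTriple s (o j) (b j)) ∈ cornerCone := by
  have hτ := h.comp_perm (Equiv.swap 0 i)
  refine mem_cornerCone_of_inCornerCone_perm (Equiv.swap 0 i)
    (InCornerCone.of_o₀_eq_zero ?_ (hτ 1) ?_ ?_ ?_)
  · simpa using hi
  · exact hτ (Equiv.swap 1 2)
  · exact hτ (Equiv.swap 0 1 * Equiv.swap 1 2)
  · exact hτ (Equiv.swap 0 2)

theorem mem_cornerCone_of_ineq₇_eq (h : Admissible s o b) (σ : Equiv.Perm (Fin 3))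
    (h₇ : o (σ 1) + b (σ 2) = s + o (σ 0) + b (σ 0) + b (σ 1) + o (σ 2)) :
    (fun j => baryTriple s (o j) (b j)) ∈ cornerCone := by
  have h₁ := h (σ * Equiv.swap 0 1)
  have h₂ := h (σ * Equiv.swap 0 2)
  exact mem_cornerCone_of_inCornerCone_perm σ (InCornerCone.of_ineq₇_eq (h σ).o_nonneg
    (h σ).b_nonneg h₁.b_nonneg h₂.o_nonneg h₂.add_le (by linarith [(h σ).ineq₃]) h₇)

theorem sub_OOO (h : Admissible s o b) {t : ℝ} (ho : ∀ i, t ≤ o i)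
    (h₇ : ∀ σ : Equiv.Perm (Fin 3),
      t * 2 ≤ s + o (σ 0) + b (σ 0) + b (σ 1) + o (σ 2) - (o (σ 1) + b (σ 2))) :
    Admissible (s - t) (fun i => o i - t) b := by
  intro σ
  obtain ⟨-, hb, ha, h₁, h₂, h₃, h₄, h₅, h₆, -⟩ := h σ
  constructor <;> linarith [ho (σ 0), h₇ σ]

theorem mem_cornerCone (h : Admissible s o b) :
    (fun j => baryTriple s (o j) (b j)) ∈ cornerCone := by
  obtain ⟨t, ht, hle, htight⟩ := exists_nonneg_forall_mul_le_exists_mul_eq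
    (S := Set.range (fun i => (o i, 1)) ∪ Set.range fun σ : Equiv.Perm (Fin 3) =>
      (s + o (σ 0) + b (σ 0) + b (σ 1) + o (σ 2) - (o (σ 1) + b (σ 2)), 2))
    (Set.toFinite _) ((Set.range_nonempty _).inl) (by
      rintro _ (⟨i, rfl⟩ | ⟨σ, rfl⟩)
      · exact ⟨h.o_nonneg i, one_pos⟩
      · exact ⟨sub_nonneg.2 (h σ).ineq₇, two_pos⟩)
  have hsub : Admissible (s - t) (fun i => o i - t) b :=
    h.sub_OOO (fun i => by simpa using hle _ (.inl ⟨i, rfl⟩)) fun σ => hle _ (.inr ⟨σ, rfl⟩)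
  suffices hmem : (fun j => baryTriple (s - t) (o j - t) (b j)) ∈ cornerCone by
    have hOOO : wordPoint ![.O, .O, .O] ∈ cornerCone :=
      PointedCone.subset_hull ⟨_, by decide, rfl⟩
    convert add_mem hmem (PointedCone.smul_mem _ ht hOOO) using 1
    ext1 i
    have hO : wordPoint ![.O, .O, .O] i = baryTriple 1 1 0 := by
      fin_cases i <;> exact Letter.triple_eq_baryTriple .O
    simpa [hO] using baryTriple_eq_sub_add_smul s (o i) (b i) t 1 0
  obtain ⟨_, ⟨i, rfl⟩ | ⟨σ, rfl⟩, heq⟩ := htight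
  · exact hsub.mem_cornerCone_of_o_eq_zero (i := i) (by linarith)
  · exact hsub.mem_cornerCone_of_ineq₇_eq σ (by linarith)

theorem add_smul {s' : ℝ} {o' b' : Fin 3 → ℝ} (h : Admissible s o b) (h' : Admissible s' o' b')
    {c c' : ℝ} (hc : 0 ≤ c) (hc' : 0 ≤ c') :
    Admissible (c * s + c' * s') (c • o + c' • o') (c • b + c' • b') := by
  intro σ
  obtain ⟨p₁, p₂, p₃, p₄, p₅, p₆, p₇, p₈, p₉, p₁₀⟩ := h σ
  obtain ⟨q₁, q₂, q₃, q₄, q₅, q₆, q₇, q₈, q₉, q₁₀⟩ := h' σ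
  constructor <;> simp only [Pi.add_apply, Pi.smul_apply, smul_eq_mul]
  · linarith [mul_nonneg hc p₁, mul_nonneg hc' q₁]
  · linarith [mul_nonneg hc p₂, mul_nonneg hc' q₂]
  · linarith [mul_le_mul_of_nonneg_left p₃ hc, mul_le_mul_of_nonneg_left q₃ hc']
  · linarith [mul_le_mul_of_nonneg_left p₄ hc, mul_le_mul_of_nonneg_left q₄ hc']
  · linarith [mul_le_mul_of_nonneg_left p₅ hc, mul_le_mul_of_nonneg_left q₅ hc']
  · linarith [mul_le_mul_of_nonneg_left p₆ hc, mul_le_mul_of_nonneg_left q₆ hc']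
  · linarith [mul_le_mul_of_nonneg_left p₇ hc, mul_le_mul_of_nonneg_left q₇ hc']
  · linarith [mul_le_mul_of_nonneg_left p₈ hc, mul_le_mul_of_nonneg_left q₈ hc']
  · linarith [mul_le_mul_of_nonneg_left p₉ hc, mul_le_mul_of_nonneg_left q₉ hc']
  · linarith [mul_le_mul_of_nonneg_left p₁₀ hc, mul_le_mul_of_nonneg_left q₁₀ hc']

end Admissible

theorem BaryIneqs.of_isCornerWord {w : Fin 3 → Letter} (hw : IsCornerWord w) :
    BaryIneqs 1 (w 0).o (w 0).b (w 1).o (w 1).b (w 2).o (w 2).b := by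
  obtain ⟨σ, q, hq, rfl⟩ := hw
  have hσ : ∀ σ : Equiv.Perm (Fin 3), (σ 0, σ 1, σ 2) ∈
      [(0, 1, 2), (0, 2, 1), (1, 0, 2), (1, 2, 0), (2, 0, 1), (2, 1, 0)] := by decide
  specialize hσ σ
  simp only [Function.comp_apply]
  generalize σ 0 = x, σ 1 = y, σ 2 = z at hσ
  simp only [List.mem_cons, Prod.mk.injEq, List.not_mem_nil, or_false] at hσ
  fin_cases hq <;> rcases hσ with ⟨rfl, rfl, rfl⟩ | ⟨rfl, rfl, rfl⟩ | ⟨rfl, rfl, rfl⟩ |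
      ⟨rfl, rfl, rfl⟩ | ⟨rfl, rfl, rfl⟩ | ⟨rfl, rfl, rfl⟩ <;>
    simp only [Matrix.cons_val, Letter.o, Letter.b] <;> constructor <;> norm_num

theorem Admissible.of_isCornerWord {w : Fin 3 → Letter} (hw : IsCornerWord w) :
    Admissible 1 (fun i => (w i).o) (fun i => (w i).b) := by
  obtain ⟨τ, q, hq, rfl⟩ := hw
  exact fun σ => BaryIneqs.of_isCornerWord ⟨τ * σ, q, hq, rfl⟩

/-- The inequalities (1)–(7) of the paper, where `x`, `y`, `z` are the triples of the qutrits `a`,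
`b`, `c`. -/
def SpectralIneqs (x y z : Fin 3 → ℝ) : Prop :=
  (x 1 + x 0 ≤ y 1 + y 0 + z 1 + z 0) ∧
  (x 2 + x 0 ≤ y 1 + y 0 + z 2 + z 0) ∧
  (x 1 + x 2 ≤ y 1 + y 0 + z 1 + z 2) ∧
  (2 * x 1 + x 0 ≤ 2 * y 1 + y 0 + 2 * z 1 + z 0) ∧
  (2 * x 0 + x 1 ≤ 2 * y 1 + y 0 + 2 * z 0 + z 1) ∧
  (2 * x 1 + x 2 ≤ 2 * y 1 + y 0 + 2 * z 1 + z 2) ∧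
  (2 * x 1 + x 2 ≤ 2 * y 0 + y 1 + 2 * z 2 + z 1)

/-- The polytope `S` of the theorem. -/
def spectralPolytope : Set (Fin 3 → Fin 3 → ℝ) :=
  {l | (∀ a, 0 ≤ l a 0 ∧ l a 0 ≤ l a 1 ∧ l a 1 ≤ l a 2 ∧ l a 0 + l a 1 + l a 2 = 1) ∧
    ∀ a b c, a ≠ b → a ≠ c → b ≠ c → SpectralIneqs (l a) (l b) (l c)}

theorem forall_pairwise_ne_iff_forall_perm {P : Fin 3 → Fin 3 → Fin 3 → Prop} :
    (∀ a b c, a ≠ b → a ≠ c → b ≠ c → P a b c) ↔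
      ∀ σ : Equiv.Perm (Fin 3), P (σ 0) (σ 1) (σ 2) := by
  constructor
  · intro h σ
    exact h _ _ _ (σ.injective.ne (by decide)) (σ.injective.ne (by decide))
      (σ.injective.ne (by decide))
  · intro h a b c hab hac hbc
    have hσ : ∀ a b c : Fin 3, a ≠ b → a ≠ c → b ≠ c →
        ∃ σ : Equiv.Perm (Fin 3), σ 0 = a ∧ σ 1 = b ∧ σ 2 = c := by decide
    obtain ⟨σ, rfl, rfl, rfl⟩ := hσ a b c hab hac hbc
    exact h σ

theorem baryIneqs_one_iff {x y z : Fin 3 → ℝ} (hx : x 0 + x 1 + x 2 = 1)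
    (hy : y 0 + y 1 + y 2 = 1) (hz : z 0 + z 1 + z 2 = 1) :
    BaryIneqs 1 (x 2 - x 1) (3 * x 0) (y 2 - y 1) (3 * y 0) (z 2 - z 1) (3 * z 0) ↔
      (0 ≤ x 0 ∧ x 0 ≤ x 1 ∧ x 1 ≤ x 2) ∧ SpectralIneqs x y z := by
  constructor
  · rintro ⟨h₁, h₂, h₃, h₄, h₅, h₆, h₇, h₈, h₉, h₁₀⟩
    unfold SpectralIneqs
    split_ands <;> linarith
  · rintro ⟨⟨h₁, h₂, h₃⟩, h₄, h₅, h₆, h₇, h₈, h₉, h₁₀⟩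
    constructor <;> linarith

theorem mem_spectralPolytope_iff {l : Fin 3 → Fin 3 → ℝ} :
    l ∈ spectralPolytope ↔ (∀ i, l i 0 + l i 1 + l i 2 = 1) ∧
      Admissible 1 (fun i => l i 2 - l i 1) (fun i => 3 * l i 0) := by
  simp only [spectralPolytope, Set.mem_ofPred_eq, forall_pairwise_ne_iff_forall_perm]
  constructor
  · rintro ⟨hl, h⟩
    have hsum i := (hl i).2.2.2
    exact ⟨hsum, fun σ => (baryIneqs_one_iff (hsum _) (hsum _) (hsum _)).2
      ⟨⟨(hl _).1, (hl _).2.1, (hl _).2.2.1⟩, h σ⟩⟩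
  · rintro ⟨hsum, h⟩
    have h' (σ : Equiv.Perm (Fin 3)) := (baryIneqs_one_iff (hsum _) (hsum _) (hsum _)).1 (h σ)
    refine ⟨fun i => ?_, fun σ => (h' σ).2⟩
    obtain ⟨h₁, h₂, h₃⟩ := (h' (Equiv.swap 0 i)).1
    rw [Equiv.swap_apply_left] at h₁ h₂ h₃
    exact ⟨h₁, h₂, h₃, hsum i⟩

theorem convex_spectralPolytope : Convex ℝ spectralPolytope := by
  intro l hl l' hl' c c' hc hc' hcc'
  rw [mem_spectralPolytope_iff] at hl hl' ⊢
  refine ⟨fun i => ?_, ?_⟩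
  · simp only [Pi.add_apply, Pi.smul_apply, smul_eq_mul]
    linear_combination c * hl.1 i + c' * hl'.1 i + hcc'
  · convert hl.2.add_smul hl'.2 hc hc' using 1
    · linarith
    all_goals
      ext i
      simp only [Pi.add_apply, Pi.smul_apply, smul_eq_mul]
      ring

theorem wordPoint_mem_spectralPolytope {w : Fin 3 → Letter} (hw : IsCornerWord w) :
    wordPoint w ∈ spectralPolytope := by
  have hcoord (x : Letter) : x.triple 0 + x.triple 1 + x.triple 2 = 1 ∧
      x.triple 2 - x.triple 1 = x.o ∧ 3 * x.triple 0 = x.b := by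
    simp only [x.triple_eq_baryTriple, baryTriple_eq, Matrix.cons_val]
    refine ⟨?_, ?_, ?_⟩ <;> ring
  rw [mem_spectralPolytope_iff]
  simp only [wordPoint, hcoord, implies_true, true_and]
  exact Admissible.of_isCornerWord hw

theorem baryTriple_one_eq {x : Fin 3 → ℝ} (hx : x 0 + x 1 + x 2 = 1) :
    baryTriple 1 (x 2 - x 1) (3 * x 0) = x := by
  rw [baryTriple_eq]
  ext j
  fin_cases j <;> simp only [Fin.reduceFinMk, Matrix.cons_val, Fin.zero_eta] <;> linarith

theorem mem_cornerCone_of_mem_spectralPolytope {l : Fin 3 → Fin 3 → ℝ}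
    (hl : l ∈ spectralPolytope) : l ∈ cornerCone := by
  obtain ⟨hsum, h⟩ := mem_spectralPolytope_iff.1 hl
  simpa only [baryTriple_one_eq (hsum _)] using h.mem_cornerCone

/-- Theorem 2: the polytope `S` cut out by the ordering and normalization constraints
together with the seven families of inequalities is the convex hull of the eleven corner
points and their images under qutrit permutations. -/
theorem corner_point_representation :
    {l : Fin 3 → Fin 3 → ℝ |
        (∀ a, 0 ≤ l a 0 ∧ l a 0 ≤ l a 1 ∧ l a 1 ≤ l a 2 ∧ l a 0 + l a 1 + l a 2 = 1) ∧
        (∀ a b c : Fin 3, a ≠ b → a ≠ c → b ≠ c →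
          (l a 1 + l a 0 ≤ l b 1 + l b 0 + l c 1 + l c 0) ∧
          (l a 2 + l a 0 ≤ l b 1 + l b 0 + l c 2 + l c 0) ∧
          (l a 1 + l a 2 ≤ l b 1 + l b 0 + l c 1 + l c 2) ∧
          (2 * l a 1 + l a 0 ≤ 2 * l b 1 + l b 0 + 2 * l c 1 + l c 0) ∧
          (2 * l a 0 + l a 1 ≤ 2 * l b 1 + l b 0 + 2 * l c 0 + l c 1) ∧
          (2 * l a 1 + l a 2 ≤ 2 * l b 1 + l b 0 + 2 * l c 1 + l c 2) ∧
          (2 * l a 1 + l a 2 ≤ 2 * l b 0 + l b 1 + 2 * l c 2 + l c 1))} =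
      convexHull ℝ
        {p : Fin 3 → Fin 3 → ℝ |
          ∃ σ : Equiv.Perm (Fin 3), ∃ q ∈ cornerPts, p = fun a => q (σ a)} := by
  rw [orbit_cornerPts_eq_image]
  change spectralPolytope = _
  have hcorner : wordPoint '' {w | IsCornerWord w} ⊆ spectralPolytope :=
    Set.image_subset_iff.2 fun _ => wordPoint_mem_spectralPolytope
  have hsum : ∀ l ∈ spectralPolytope, (∑ j, LinearMap.proj j ∘ₗ LinearMap.proj 0 :
      (Fin 3 → Fin 3 → ℝ) →ₗ[ℝ] ℝ) l = 1 := fun l hl => by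
    simpa [Fin.sum_univ_three] using (mem_spectralPolytope_iff.1 hl).1 0
  apply Set.Subset.antisymm
  · intro l hl
    exact mem_convexHull_of_mem_pointedConeHull _ (fun y hy => hsum y (hcorner hy))
      (mem_cornerCone_of_mem_spectralPolytope hl) (hsum l hl)
  · exact convexHull_min hcorner convex_spectralPolytope
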